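/- For every a ≥ 1.032695, the first Dirichlet biharmonic eigenvalue of the rectangle R_a is strictly larger than that of the unit square: λ₁(a) > λ₁(1). Consequently any minimiser of λ₁ among rectangles of unit area lies in [1, 1.032695). -/

import Mathlib

open MeasureTheory Real Filter

noncomputable section

/-- Directional (partial) derivative of `u : ℝ × ℝ → ℝ` in direction `v`. -/
def pd (v : ℝ × ℝ) (u : ℝ × ℝ → ℝ) : ℝ × ℝ → ℝ := fun p => fderiv ℝ u p v

/-- Second partial derivative `∂²u/∂x²`. -/
def uxx (u : ℝ × ℝ → ℝ) : ℝ × ℝ → ℝ := pd (1, 0) (pd (1, 0) u)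

/-- Second partial derivative `∂²u/∂y²`. -/
def uyy (u : ℝ × ℝ → ℝ) : ℝ × ℝ → ℝ := pd (0, 1) (pd (0, 1) u)

/-- Mixed second partial derivative `∂²u/∂x∂y`. -/
def uxy (u : ℝ × ℝ → ℝ) : ℝ × ℝ → ℝ := pd (0, 1) (pd (1, 0) u)

/-- The Laplacian `Δu = u_xx + u_yy`. -/
def lap (u : ℝ × ℝ → ℝ) : ℝ × ℝ → ℝ := fun p => uxx u p + uyy u p

/-- The open rectangle `R_a = (0,a) × (0,1/a)` of unit area. -/
def Rect (a : ℝ) : Set (ℝ × ℝ) := Set.Ioo 0 a ×ˢ Set.Ioo 0 (1 / a)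

/-- Admissible test functions: smooth, compactly supported inside `Ω`. -/
def Adm (Ω : Set (ℝ × ℝ)) (u : ℝ × ℝ → ℝ) : Prop :=
  ContDiff ℝ (⊤ : ℕ∞) u ∧ HasCompactSupport u ∧ tsupport u ⊆ Ω

/-- First Dirichlet eigenvalue of the biharmonic operator on `R_a`,
characterized variationally as the infimum of the Rayleigh quotient. -/
def lam1 (a : ℝ) : ℝ :=
  sInf { μ | ∃ u : ℝ × ℝ → ℝ, Adm (Rect a) u ∧ u ≠ 0 ∧
    μ = (∫ p, (lap u p) ^ 2) / (∫ p, (u p) ^ 2) }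

/-!
Transplanting a test function `u` on `Rect a` to `w(x, y) = u(a x, y / a)` on the unit square keeps
`∫ u²`, and with `t = a⁴` the bending energies satisfy
`t ∫ (Δu)² = ∫ (Δw)² + (t - 1) ((t + 1) ∫ w_yy² + 2 ∫ w_xy²)`.
On horizontal lines Wirtinger's inequality gives `∫ w_xy² ≥ π² ∫ w_y²`; on vertical lines what
remains is the energy of a clamped beam under tension, whose lowest eigenvalue is estimated by a
Riccati argument: the quadratic form is a perfect square plus a total derivative as long as there is
no conjugate point. For `a ≥ 1.032695` this bounds the last bracket below by `1298 ∫ w²`. The trial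
function `x² (1 - x)² y² (1 - y)²` shows `λ₁(1) ≤ 1296`, so `t λ₁(a) ≥ λ₁(1) + 1298 (t - 1)`
exceeds `t λ₁(1)`.
-/

open Set Topology

section Riccati

variable {a b : ℝ} {f : ℝ → ℝ}

theorem integral_nonneg_of_add_deriv_nonneg {K : Set ℝ} {q G G' : ℝ → ℝ} (hab : a ≤ b)
    (hK : IsClosed K) (hKab : K ⊆ Ioo a b) (hq : Continuous q) (hq₀ : ∀ x ∉ K, q x = 0)
    (hG₀ : ∀ x ∉ K, G x = 0) (hG : ∀ x ∈ Ioo a b, HasDerivAt G (G' x) x)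
    (h : ∀ x ∈ Ioo a b, 0 ≤ q x + G' x) : 0 ≤ ∫ x, q x := by
  have hGK : tsupport G ⊆ K := closure_minimal (Function.support_subset_iff'.2 hG₀) hK
  have hGcont : Continuous G :=
    continuous_of_tsupport fun x hx => (hG x (hKab (hGK hx))).continuousAt
  have hGa : G a = 0 := hG₀ a fun ha => left_notMem_Ioo (hKab ha)
  have hGb : G b = 0 := hG₀ b fun hb => right_notMem_Ioo (hKab hb)
  have hle := intervalIntegral.sub_le_integral_of_hasDeriv_right_of_le hab
    hGcont.neg.continuousOn (fun x hx => (hG x hx).neg.hasDerivWithinAt)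
    hq.continuousOn.integrableOn_Icc fun x hx => neg_le_iff_add_nonneg.2 (h x hx)
  have hsupp : Function.support q ⊆ Ioc a b :=
    (Function.support_subset_iff'.2 hq₀).trans (hKab.trans Ioo_subset_Ioc_self)
  simpa only [Pi.neg_apply, hGa, hGb, sub_self,
    intervalIntegral.integral_eq_integral_of_support_subset hsupp] using hle

theorem integral_deriv_sq_sub_nonneg_of_riccati {q : ℝ} {P : ℝ → ℝ} (hab : a ≤ b)
    (hf : ContDiff ℝ 1 f) (hfab : tsupport f ⊆ Ioo a b)
    (hP : ∀ x ∈ Ioo a b, HasDerivAt P (-q - P x ^ 2) x) :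
    0 ≤ ∫ x, (deriv f x ^ 2 - q * f x ^ 2) := by
  have hf₀ : ∀ x ∉ tsupport f, f x = 0 := fun x => image_eq_zero_of_notMem_tsupport
  have hf₁ : ∀ x ∉ tsupport f, deriv f x = 0 :=
    Function.support_subset_iff'.1 support_deriv_subset
  have hdf : ∀ x, HasDerivAt f (deriv f x) x := fun x =>
    (hf.differentiable one_ne_zero x).hasDerivAt
  have hq : Continuous fun x => deriv f x ^ 2 - q * f x ^ 2 :=
    ((hf.continuous_deriv le_rfl).pow 2).sub (continuous_const.mul (hf.continuous.pow 2))
  -- Completing the square: `f'² - q f² = (f' - P f)² + (P f²)'`.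
  refine integral_nonneg_of_add_deriv_nonneg (G := fun x => -(P x * f x ^ 2))
    (G' := fun x => (deriv f x - P x * f x) ^ 2 - (deriv f x ^ 2 - q * f x ^ 2))
    hab (isClosed_tsupport f) hfab hq (fun x hx => by simp [hf₀ x hx, hf₁ x hx])
    (fun x hx => by simp [hf₀ x hx]) (fun x hx => ?_) fun x _ => ?_
  · refine ((hP x hx).mul ((hdf x).pow 2)).neg.congr_deriv ?_
    simp only [Pi.pow_apply]
    ring
  · rw [add_sub_cancel]
    positivity

theorem integral_deriv_deriv_sq_nonneg_of_riccati {τ μ : ℝ} {P Q R : ℝ → ℝ} (hab : a ≤ b)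
    (hf : ContDiff ℝ 2 f) (hfab : tsupport f ⊆ Ioo a b)
    (hP : ∀ x ∈ Ioo a b, HasDerivAt P (τ + 2 * Q x - P x ^ 2) x)
    (hQ : ∀ x ∈ Ioo a b, HasDerivAt Q (R x - P x * Q x) x)
    (hR : ∀ x ∈ Ioo a b, HasDerivAt R (-μ - Q x ^ 2) x) :
    0 ≤ ∫ x, (deriv (deriv f) x ^ 2 + τ * deriv f x ^ 2 - μ * f x ^ 2) := by
  have hf₀ : ∀ x ∉ tsupport f, f x = 0 := fun x => image_eq_zero_of_notMem_tsupport
  have hf₁ : ∀ x ∉ tsupport f, deriv f x = 0 :=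
    Function.support_subset_iff'.1 support_deriv_subset
  have hf₂ : ∀ x ∉ tsupport f, deriv (deriv f) x = 0 :=
    Function.support_subset_iff'.1 (support_deriv_subset.trans tsupport_deriv_subset)
  have hf' : ContDiff ℝ 1 (deriv f) := hf.deriv'
  have hdf : ∀ x, HasDerivAt f (deriv f x) x := fun x =>
    (hf.differentiable two_ne_zero x).hasDerivAt
  have hdf' : ∀ x, HasDerivAt (deriv f) (deriv (deriv f) x) x := fun x =>
    (hf'.differentiable one_ne_zero x).hasDerivAt
  have hq : Continuous fun x => deriv (deriv f) x ^ 2 + τ * deriv f x ^ 2 - μ * f x ^ 2 :=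
    (((hf'.continuous_deriv le_rfl).pow 2).add (continuous_const.mul (hf'.continuous.pow 2))).sub
      (continuous_const.mul (hf.continuous.pow 2))
  -- `f''² + τ f'² - μ f² = (f'' - P f' + Q f)² + (P f'² - 2 Q f f' + R f²)'`
  refine integral_nonneg_of_add_deriv_nonneg
    (G := fun x => 2 * (Q x * (f x * deriv f x)) - P x * deriv f x ^ 2 - R x * f x ^ 2)
    (G' := fun x => (deriv (deriv f) x - P x * deriv f x + Q x * f x) ^ 2
      - (deriv (deriv f) x ^ 2 + τ * deriv f x ^ 2 - μ * f x ^ 2))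
    hab (isClosed_tsupport f) hfab hq
    (fun x hx => by simp [hf₀ x hx, hf₁ x hx, hf₂ x hx])
    (fun x hx => by simp [hf₀ x hx, hf₁ x hx]) (fun x hx => ?_) fun x _ => ?_
  · refine (((((hQ x hx).mul ((hdf x).mul (hdf' x))).const_mul 2).sub
      ((hP x hx).mul ((hdf' x).pow 2))).sub ((hR x hx).mul ((hdf x).pow 2))).congr_deriv ?_
    simp only [Pi.mul_apply, Pi.pow_apply]
    ring
  · rw [add_sub_cancel]
    positivity

theorem wirtinger_inequality (hab : a < b) (hf : ContDiff ℝ 1 f) (hfab : tsupport f ⊆ Ioo a b) :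
    0 ≤ ∫ x, (deriv f x ^ 2 - (π / (b - a)) ^ 2 * f x ^ 2) := by
  set ω := π / (b - a)
  have hba : 0 < b - a := sub_pos.2 hab
  have hlin (x : ℝ) : HasDerivAt (fun x => ω * (x - a)) ω x := by
    simpa using ((hasDerivAt_id x).sub_const a).const_mul ω
  refine integral_deriv_sq_sub_nonneg_of_riccati hab.le hf hfab
    (P := fun x => ω * (cos (ω * (x - a)) / sin (ω * (x - a)))) fun x hx => ?_
  have hsin : sin (ω * (x - a)) ≠ 0 := by
    refine (sin_pos_of_pos_of_lt_pi (mul_pos (div_pos pi_pos hba) (sub_pos.2 hx.1)) ?_).ne'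
    rw [div_mul_eq_mul_div, div_lt_iff₀ hba]
    exact mul_lt_mul_of_pos_left (sub_lt_sub_right hx.2 a) pi_pos
  refine (((hlin x).cos.div (hlin x).sin hsin).const_mul ω).congr_deriv ?_
  field_simp

end Riccati

section Beam

/-- The Wronskian `u₁ u₂' - u₁' u₂` of the solutions `u₁ = cosh (α x) - cos (β x)` and
`u₂ = β sinh (α x) - α sin (β x)` of the beam equation `u'''' - (α² - β²) u'' = α² β² u`, which span
the solutions with a double zero at the origin. The minors below are the
`u₁⁽ⁱ⁾ u₂⁽ʲ⁾ - u₁⁽ʲ⁾ u₂⁽ⁱ⁾`, simplified by the Pythagorean identities. -/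
def beamMinor₀₁ (α β x : ℝ) : ℝ :=
  2 * α * β * (1 - cosh (α * x) * cos (β * x)) + (α ^ 2 - β ^ 2) * (sinh (α * x) * sin (β * x))

/-- The minor `u₁ u₂'' - u₁'' u₂` of the solutions in `beamMinor₀₁`. -/
def beamMinor₀₂ (α β x : ℝ) : ℝ :=
  (α ^ 2 + β ^ 2) * (α * (cosh (α * x) * sin (β * x)) - β * (sinh (α * x) * cos (β * x)))

/-- The minor `u₁' u₂'' - u₁'' u₂'` of the solutions in `beamMinor₀₁`. -/
def beamMinor₁₂ (α β x : ℝ) : ℝ :=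
  α * β * (2 * α * β * (sinh (α * x) * sin (β * x))
    - (α ^ 2 - β ^ 2) * (1 - cosh (α * x) * cos (β * x)))

/-- The minor `u₁' u₂''' - u₁''' u₂'` of the solutions in `beamMinor₀₁`. -/
def beamMinor₁₃ (α β x : ℝ) : ℝ :=
  α * β * (α * (α ^ 2 + β ^ 2) * (sinh (α * x) * cos (β * x))
    + β * (α ^ 2 + β ^ 2) * (cosh (α * x) * sin (β * x)))

section Deriv

variable (α β x : ℝ)

theorem hasDerivAt_cosh_mul : HasDerivAt (fun x => cosh (α * x)) (α * sinh (α * x)) x := by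
  simpa [mul_comm] using ((hasDerivAt_id x).const_mul α).cosh

theorem hasDerivAt_sinh_mul : HasDerivAt (fun x => sinh (α * x)) (α * cosh (α * x)) x := by
  simpa [mul_comm] using ((hasDerivAt_id x).const_mul α).sinh

theorem hasDerivAt_cos_mul : HasDerivAt (fun x => cos (β * x)) (-(β * sin (β * x))) x := by
  simpa [mul_comm] using ((hasDerivAt_id x).const_mul β).cos

theorem hasDerivAt_sin_mul : HasDerivAt (fun x => sin (β * x)) (β * cos (β * x)) x := by
  simpa [mul_comm] using ((hasDerivAt_id x).const_mul β).sin

theorem hasDerivAt_beamMinor₀₁ : HasDerivAt (beamMinor₀₁ α β) (beamMinor₀₂ α β x) x := by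
  have hcc := (hasDerivAt_cosh_mul α x).mul (hasDerivAt_cos_mul β x)
  have hss := (hasDerivAt_sinh_mul α x).mul (hasDerivAt_sin_mul β x)
  refine (((hcc.const_sub 1).const_mul (2 * α * β)).add
    (hss.const_mul (α ^ 2 - β ^ 2))).congr_deriv ?_
  rw [beamMinor₀₂]
  ring

theorem hasDerivAt_beamMinor₀₂ : HasDerivAt (beamMinor₀₂ α β)
    ((α ^ 2 + β ^ 2) ^ 2 * (sinh (α * x) * sin (β * x))) x := by
  have hcs := (hasDerivAt_cosh_mul α x).mul (hasDerivAt_sin_mul β x)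
  have hsc := (hasDerivAt_sinh_mul α x).mul (hasDerivAt_cos_mul β x)
  refine (((hcs.const_mul α).sub (hsc.const_mul β)).const_mul (α ^ 2 + β ^ 2)).congr_deriv ?_
  ring

theorem hasDerivAt_beamMinor₁₂ : HasDerivAt (beamMinor₁₂ α β) (beamMinor₁₃ α β x) x := by
  have hcc := (hasDerivAt_cosh_mul α x).mul (hasDerivAt_cos_mul β x)
  have hss := (hasDerivAt_sinh_mul α x).mul (hasDerivAt_sin_mul β x)
  refine (((hss.const_mul (2 * α * β)).sub
    ((hcc.const_sub 1).const_mul (α ^ 2 - β ^ 2))).const_mul (α * β)).congr_deriv ?_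
  rw [beamMinor₁₃]
  ring

theorem hasDerivAt_beamMinor₁₃ : HasDerivAt (beamMinor₁₃ α β)
    (α * β * (α ^ 2 + β ^ 2) ^ 2 * (cosh (α * x) * cos (β * x))) x := by
  have hcs := (hasDerivAt_cosh_mul α x).mul (hasDerivAt_sin_mul β x)
  have hsc := (hasDerivAt_sinh_mul α x).mul (hasDerivAt_cos_mul β x)
  refine (((hsc.const_mul (α * (α ^ 2 + β ^ 2))).add
    (hcs.const_mul (β * (α ^ 2 + β ^ 2)))).const_mul (α * β)).congr_deriv ?_
  ring

/-- A Plücker relation: the left side is the numerator of the derivative of the quotient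
`beamMinor₁₃ / beamMinor₀₁`. -/
theorem beamMinor_plucker :
    beamMinor₀₁ α β x * (α * β * (α ^ 2 + β ^ 2) ^ 2 * (cosh (α * x) * cos (β * x)))
      - beamMinor₁₃ α β x * beamMinor₀₂ α β x =
    -(α ^ 2 * β ^ 2) * beamMinor₀₁ α β x ^ 2 - beamMinor₁₂ α β x ^ 2 := by
  simp only [beamMinor₀₁, beamMinor₀₂, beamMinor₁₂, beamMinor₁₃]
  linear_combination (-(α * β * (α ^ 2 + β ^ 2)) ^ 2) *
    ((cosh (α * x) ^ 2 - sinh (α * x) ^ 2) * sin_sq_add_cos_sq (β * x) + cosh_sq (α * x))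

end Deriv

variable {α β x L : ℝ}

theorem beamMinor₀₂_pos (hα : 0 < α) (hβ : 0 < β) (hx : 0 < x) (hβx : β * x ≤ π) :
    0 < beamMinor₀₂ α β x := by
  have hmono : StrictMonoOn (beamMinor₀₂ α β) (Icc 0 x) := by
    refine strictMonoOn_of_hasDerivWithinAt_pos (convex_Icc 0 x)
      (HasDerivAt.continuousOn fun y _ => hasDerivAt_beamMinor₀₂ α β y)
      (fun y _ => (hasDerivAt_beamMinor₀₂ α β y).hasDerivWithinAt) fun y hy => ?_
    rw [interior_Icc] at hy
    have hsinh : 0 < sinh (α * y) := sinh_pos_iff.2 (mul_pos hα hy.1)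
    have hsin : 0 < sin (β * y) := sin_pos_of_pos_of_lt_pi (mul_pos hβ hy.1)
      ((mul_lt_mul_of_pos_left hy.2 hβ).trans_le hβx)
    positivity
  simpa [beamMinor₀₂] using hmono (left_mem_Icc.2 hx.le) (right_mem_Icc.2 hx.le) hx

theorem beamMinor₀₁_pos_of_mul_le_pi (hα : 0 < α) (hβ : 0 < β) (hx : 0 < x) (hβx : β * x ≤ π) :
    0 < beamMinor₀₁ α β x := by
  have hmono : StrictMonoOn (beamMinor₀₁ α β) (Icc 0 x) := by
    refine strictMonoOn_of_hasDerivWithinAt_pos (convex_Icc 0 x)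
      (HasDerivAt.continuousOn fun y _ => hasDerivAt_beamMinor₀₁ α β y)
      (fun y _ => (hasDerivAt_beamMinor₀₁ α β y).hasDerivWithinAt) fun y hy => ?_
    rw [interior_Icc] at hy
    exact beamMinor₀₂_pos hα hβ hy.1 ((mul_le_mul_of_nonneg_left hy.2.le hβ.le).trans hβx)
  simpa [beamMinor₀₁] using hmono (left_mem_Icc.2 hx.le) (right_mem_Icc.2 hx.le) hx

theorem concaveOn_beamMinor₀₁ (hα : 0 < α) (hβ : 0 < β) :
    ConcaveOn ℝ (Icc (π / β) (2 * π / β)) (beamMinor₀₁ α β) := by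
  refine concaveOn_of_hasDerivWithinAt2_nonpos (convex_Icc _ _)
    (HasDerivAt.continuousOn fun y _ => hasDerivAt_beamMinor₀₁ α β y)
    (fun y _ => (hasDerivAt_beamMinor₀₁ α β y).hasDerivWithinAt)
    (fun y _ => (hasDerivAt_beamMinor₀₂ α β y).hasDerivWithinAt) fun y hy => ?_
  rw [interior_Icc, mem_Ioo, div_lt_iff₀' hβ, lt_div_iff₀' hβ] at hy
  have hy₀ : 0 < y := pos_of_mul_pos_right (pi_pos.trans hy.1) hβ.le
  have hsinh : 0 < sinh (α * y) := sinh_pos_iff.2 (mul_pos hα hy₀)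
  have hsin : sin (β * y) ≤ 0 := by
    rw [← sin_sub_two_pi]
    exact sin_nonpos_of_nonpos_of_neg_pi_le (by linarith) (by linarith)
  exact mul_nonpos_of_nonneg_of_nonpos (by positivity)
    (mul_nonpos_of_nonneg_of_nonpos hsinh.le hsin)

theorem beamMinor₀₁_pos (hα : 0 < α) (hβ : 0 < β) (hβL : β * L ≤ 2 * π)
    (hL : 0 < beamMinor₀₁ α β L) (hx : x ∈ Ioc 0 L) : 0 < beamMinor₀₁ α β x := by
  rcases le_or_gt (β * x) π with hβx | hβx
  · exact beamMinor₀₁_pos_of_mul_le_pi hα hβ hx.1 hβx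
  have hπx : π / β ≤ x := (div_le_iff₀' hβ).2 hβx.le
  have hL2π : L ≤ 2 * π / β := (le_div_iff₀' hβ).2 hβL
  have hπ : 0 < beamMinor₀₁ α β (π / β) :=
    beamMinor₀₁_pos_of_mul_le_pi hα hβ (div_pos pi_pos hβ) (mul_div_cancel₀ _ hβ.ne').le
  have hmin := (concaveOn_beamMinor₀₁ hα hβ).min_le_of_mem_Icc
    ⟨le_rfl, hπx.trans (hx.2.trans hL2π)⟩ ⟨hπx.trans hx.2, hL2π⟩ ⟨hπx, hx.2⟩
  exact (lt_min hπ hL).trans_le hmin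

theorem clamped_beam_inequality {f : ℝ → ℝ} (hL : 0 ≤ L) (hf : ContDiff ℝ 2 f)
    (hfL : tsupport f ⊆ Ioo 0 L) (hpos : ∀ x ∈ Ioo 0 L, 0 < beamMinor₀₁ α β x) :
    0 ≤ ∫ x, (deriv (deriv f) x ^ 2 + (α ^ 2 - β ^ 2) * deriv f x ^ 2
      - α ^ 2 * β ^ 2 * f x ^ 2) := by
  refine integral_deriv_deriv_sq_nonneg_of_riccati hL hf hfL
    (P := fun x => beamMinor₀₂ α β x / beamMinor₀₁ α β x)
    (Q := fun x => beamMinor₁₂ α β x / beamMinor₀₁ α β x)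
    (R := fun x => beamMinor₁₃ α β x / beamMinor₀₁ α β x)
    (fun x hx => ?_) (fun x hx => ?_) (fun x hx => ?_)
  all_goals have hne := (hpos x hx).ne'
  · refine ((hasDerivAt_beamMinor₀₂ α β x).div
      (hasDerivAt_beamMinor₀₁ α β x) hne).congr_deriv ?_
    have hminor : (α ^ 2 + β ^ 2) ^ 2 * (sinh (α * x) * sin (β * x)) =
        (α ^ 2 - β ^ 2) * beamMinor₀₁ α β x + 2 * beamMinor₁₂ α β x := by
      rw [beamMinor₀₁, beamMinor₁₂]
      ring
    rw [hminor]
    field_simp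
  · refine ((hasDerivAt_beamMinor₁₂ α β x).div
      (hasDerivAt_beamMinor₀₁ α β x) hne).congr_deriv ?_
    field_simp
  · refine ((hasDerivAt_beamMinor₁₃ α β x).div
      (hasDerivAt_beamMinor₀₁ α β x) hne).congr_deriv ?_
    field_simp
    linear_combination beamMinor_plucker α β x

theorem beamMinor₀₁_one_pos : 0 < beamMinor₀₁ 5.449 4.523 1 := by
  set η : ℝ := 3 * π / 2 - 4.523 with hη
  have hη_gt : 0.1892 < η := by linarith [pi_gt_d4]
  have hη_lt : η < 0.19 := by linarith [pi_lt_d4]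
  have hsin : 0.188 < sin η := by
    have hcube : η ^ 3 ≤ 0.19 ^ 3 := pow_le_pow_left₀ (by linarith) hη_lt.le 3
    have hcubic := sin_gt_sub_cube (x := η) (by linarith)
    linarith
  have hsinh : 0 < sinh 5.449 := sinh_pos_iff.2 (by norm_num)
  have hcosh_sin : 0.188 * sinh 5.449 ≤ cosh 5.449 * sin η := by
    rw [mul_comm]
    gcongr
    exact (sinh_lt_cosh _).le
  have hsinh_cos : sinh 5.449 * cos η ≤ sinh 5.449 := mul_le_of_le_one_right hsinh.le (cos_le_one η)
  have hβ : (4.523 : ℝ) = π / 2 - η + π := by rw [hη]; ring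
  rw [beamMinor₀₁, mul_one, mul_one, hβ, sin_add_pi, cos_add_pi, sin_pi_div_two_sub,
    cos_pi_div_two_sub, ← hβ]
  nlinarith

end Beam

section PartialDerivatives

variable {u : ℝ × ℝ → ℝ}

theorem contDiff_pd (hu : ContDiff ℝ (⊤ : ℕ∞) u) (w : ℝ × ℝ) : ContDiff ℝ (⊤ : ℕ∞) (pd w u) :=
  (hu.fderiv_right (m := (⊤ : ℕ∞)) le_rfl).clm_apply contDiff_const

theorem pd_comm (hu : ContDiff ℝ 2 u) (w z : ℝ × ℝ) : pd w (pd z u) = pd z (pd w u) := by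
  have hsecond (w z p : ℝ × ℝ) : pd w (pd z u) p = fderiv ℝ (fderiv ℝ u) p w z := by
    have hd : DifferentiableAt ℝ (fderiv ℝ u) p :=
      (hu.fderiv_right (m := 1) (by norm_num)).differentiable one_ne_zero p
    change fderiv ℝ (fun q => fderiv ℝ u q z) p w = _
    simp [fderiv_clm_apply hd (differentiableAt_const z)]
  ext p
  rw [hsecond, hsecond]
  exact hu.contDiffAt.isSymmSndFDerivAt (by simp) w z

theorem deriv_fst_slice (hu : Differentiable ℝ u) (y : ℝ) :
    deriv (fun x => u (x, y)) = fun x => pd (1, 0) u (x, y) := by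
  ext x
  exact ((hu (x, y)).hasFDerivAt.comp_hasDerivAt x
    ((hasDerivAt_id x).prodMk (hasDerivAt_const x y))).deriv

theorem deriv_snd_slice (hu : Differentiable ℝ u) (x : ℝ) :
    deriv (fun y => u (x, y)) = fun y => pd (0, 1) u (x, y) := by
  ext y
  exact ((hu (x, y)).hasFDerivAt.comp_hasDerivAt y
    ((hasDerivAt_const y x).prodMk (hasDerivAt_id y))).deriv

end PartialDerivatives

namespace Adm

variable {Ω : Set (ℝ × ℝ)} {u v : ℝ × ℝ → ℝ}

theorem contDiff (hu : Adm Ω u) {n : ℕ} : ContDiff ℝ n u := contDiff_infty.1 hu.1 n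

theorem continuous (hu : Adm Ω u) : Continuous u := hu.1.continuous

theorem differentiable (hu : Adm Ω u) : Differentiable ℝ u := hu.1.differentiable (by simp)

protected theorem pd (hu : Adm Ω u) (w : ℝ × ℝ) : Adm Ω (pd w u) :=
  ⟨contDiff_pd hu.1 w, hu.2.1.fderiv_apply ℝ w, (tsupport_fderiv_apply_subset ℝ w).trans hu.2.2⟩

protected theorem uxx (hu : Adm Ω u) : Adm Ω (uxx u) := (hu.pd _).pd _

protected theorem uxy (hu : Adm Ω u) : Adm Ω (uxy u) := (hu.pd _).pd _

protected theorem uyy (hu : Adm Ω u) : Adm Ω (uyy u) := (hu.pd _).pd _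

theorem integrable_mul (hu : Adm Ω u) (hv : Adm Ω v) : Integrable fun p => u p * v p :=
  (hu.continuous.mul hv.continuous).integrable_of_hasCompactSupport hu.2.1.mul_right

theorem integrable_sq (hu : Adm Ω u) : Integrable fun p => u p ^ 2 := by
  simpa only [sq] using hu.integrable_mul hu

theorem integral_sq_pos (hu : Adm Ω u) (hu₀ : u ≠ 0) : 0 < ∫ p, u p ^ 2 := by
  obtain ⟨p, hp⟩ := Function.ne_iff.1 hu₀
  exact (hu.continuous.pow 2).integral_pos_of_hasCompactSupport_nonneg_nonzero
    (by simpa only [sq] using hu.2.1.mul_right) (fun _ => sq_nonneg _) (pow_ne_zero 2 hp)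

theorem integral_mul_pd (hu : Adm Ω u) (hv : Adm Ω v) (w : ℝ × ℝ) :
    ∫ p, u p * pd w v p = -∫ p, pd w u p * v p :=
  integral_mul_fderiv_eq_neg_fderiv_mul_of_integrable ((hu.pd w).integrable_mul hv)
    (hu.integrable_mul (hv.pd w)) (hu.integrable_mul hv) (fun p _ => hu.differentiable p)
    fun p _ => hv.differentiable p

theorem integral_uxx_mul_uyy (hu : Adm Ω u) : ∫ p, uxx u p * uyy u p = ∫ p, uxy u p ^ 2 := by
  have hux := hu.pd (1, 0)
  have hcomm : pd (1, 0) (uyy u) = pd (0, 1) (uxy u) := by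
    rw [uyy, uxy, pd_comm (hu.pd _).contDiff, pd_comm hu.contDiff (1, 0)]
  calc ∫ p, uxx u p * uyy u p = -∫ p, pd (1, 0) u p * pd (1, 0) (uyy u) p := by
        rw [hux.integral_mul_pd hu.uyy, neg_neg]
        rfl
    _ = ∫ p, uxy u p * uxy u p := by
        rw [hcomm, hux.integral_mul_pd hu.uxy, neg_neg]
        rfl
    _ = ∫ p, uxy u p ^ 2 := by simp only [sq]

theorem integral_lap_sq (hu : Adm Ω u) : ∫ p, lap u p ^ 2 =
    (∫ p, uxx u p ^ 2) + (∫ p, uyy u p ^ 2) + 2 * ∫ p, uxy u p ^ 2 := by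
  have hxx := hu.uxx.integrable_sq
  have hyy := hu.uyy.integrable_sq
  have hxx_yy : Integrable fun p => uxx u p ^ 2 + uyy u p ^ 2 := hxx.add hyy
  have hcross := (hu.uxx.integrable_mul hu.uyy).const_mul 2
  rw [← hu.integral_uxx_mul_uyy, ← integral_const_mul, ← integral_add hxx hyy,
    ← integral_add hxx_yy hcross]
  congr 1 with p
  rw [lap]
  ring

end Adm

section Slicing

variable {Ω : Set (ℝ × ℝ)} {u : ℝ × ℝ → ℝ} {a b L α β : ℝ}

theorem integral_prod_nonneg {φ : ℝ × ℝ → ℝ} (hφ : Integrable φ)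
    (h : ∀ x, 0 ≤ ∫ y, φ (x, y)) : 0 ≤ ∫ p, φ p := by
  rw [Measure.volume_eq_prod] at hφ ⊢
  rw [integral_prod _ hφ]
  exact integral_nonneg h

theorem integral_prod_symm_nonneg {φ : ℝ × ℝ → ℝ} (hφ : Integrable φ)
    (h : ∀ y, 0 ≤ ∫ x, φ (x, y)) : 0 ≤ ∫ p, φ p := by
  rw [Measure.volume_eq_prod] at hφ ⊢
  rw [integral_prod_symm _ hφ]
  exact integral_nonneg h

theorem Adm.wirtinger_inequality_fst (hu : Adm Ω u) (hab : a < b)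
    (hΩ : Ω ⊆ Prod.fst ⁻¹' Ioo a b) :
    (π / (b - a)) ^ 2 * ∫ p, u p ^ 2 ≤ ∫ p, pd (1, 0) u p ^ 2 := by
  have hux := (hu.pd (1, 0)).integrable_sq
  have hu₂ := hu.integrable_sq.const_mul ((π / (b - a)) ^ 2)
  rw [← sub_nonneg, ← integral_const_mul, ← integral_sub hux hu₂]
  refine integral_prod_symm_nonneg (hux.sub hu₂) fun y => ?_
  have hslice : tsupport (fun x => u (x, y)) ⊆ Ioo a b :=
    (tsupport_comp_subset_preimage u (f := fun x => (x, y)) (by fun_prop)).trans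
      fun x hx => hΩ (hu.2.2 hx)
  have hsmooth : ContDiff ℝ 1 fun x => u (x, y) := (hu.contDiff (n := 1)).comp (by fun_prop)
  simpa only [deriv_fst_slice hu.differentiable] using wirtinger_inequality hab hsmooth hslice

theorem Adm.clamped_beam_inequality_snd (hu : Adm Ω u) (hL : 0 ≤ L)
    (hΩ : Ω ⊆ Prod.snd ⁻¹' Ioo 0 L)
    (hpos : ∀ y ∈ Ioo 0 L, 0 < beamMinor₀₁ α β y) :
    α ^ 2 * β ^ 2 * ∫ p, u p ^ 2 ≤
      (∫ p, uyy u p ^ 2) + (α ^ 2 - β ^ 2) * ∫ p, pd (0, 1) u p ^ 2 := by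
  have hyy := hu.uyy.integrable_sq
  have huy := (hu.pd (0, 1)).integrable_sq.const_mul (α ^ 2 - β ^ 2)
  have hu₂ := hu.integrable_sq.const_mul (α ^ 2 * β ^ 2)
  have hsum : Integrable fun p => uyy u p ^ 2 + (α ^ 2 - β ^ 2) * pd (0, 1) u p ^ 2 := hyy.add huy
  rw [← sub_nonneg, ← integral_const_mul, ← integral_const_mul, ← integral_add hyy huy,
    ← integral_sub hsum hu₂]
  refine integral_prod_nonneg (hsum.sub hu₂) fun x => ?_
  have hslice : tsupport (fun y => u (x, y)) ⊆ Ioo 0 L :=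
    (tsupport_comp_subset_preimage u (f := fun y => (x, y)) (by fun_prop)).trans
      fun y hy => hΩ (hu.2.2 hy)
  have hsmooth : ContDiff ℝ 2 fun y => u (x, y) := (hu.contDiff (n := 2)).comp (by fun_prop)
  simpa only [deriv_snd_slice hu.differentiable, deriv_snd_slice (hu.pd _).differentiable, uyy]
    using clamped_beam_inequality hL hsmooth hslice hpos

theorem Adm.mul_integral_sq_le_uyy_add_uxy {w : ℝ × ℝ → ℝ} (hw : Adm (Rect 1) w)
    (ha : 1.032695 ≤ a) :
    1298 * ∫ p, w p ^ 2 ≤ (1 + a ^ 4) * (∫ p, uyy w p ^ 2) + 2 * ∫ p, uxy w p ^ 2 := by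
  have ha₄ : 1.1373 ≤ a ^ 4 := by
    refine le_trans ?_ (pow_le_pow_left₀ (by norm_num) ha 4)
    norm_num
  have hxy : π ^ 2 * ∫ p, pd (0, 1) w p ^ 2 ≤ ∫ p, uxy w p ^ 2 := by
    simpa only [sub_zero, div_one, uxy, pd_comm hw.contDiff (0, 1)] using
      (hw.pd (0, 1)).wirtinger_inequality_fst zero_lt_one fun p hp => hp.1
  -- On the hyperbola `α² - β² = 2 π² / 2.1373`, which lets the two `pd (0, 1) w` terms cancel, the
  -- minor `beamMinor₀₁ α β 1` first vanishes just beyond `(5.449, 4.523)`.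
  have hyy := hw.clamped_beam_inequality_snd (α := 5.449) (β := 4.523) zero_le_one
    (fun p hp => by simpa using hp.2) fun y hy =>
      beamMinor₀₁_pos (by norm_num) (by norm_num) (by linarith [pi_gt_d4])
        beamMinor₀₁_one_pos ⟨hy.1, hy.2.le⟩
  calc 1298 * ∫ p, w p ^ 2 ≤ 2.1373 * (5.449 ^ 2 * 4.523 ^ 2 * ∫ p, w p ^ 2) := by
        rw [← mul_assoc]
        gcongr
        norm_num
    _ ≤ 2.1373 * ((∫ p, uyy w p ^ 2) + (5.449 ^ 2 - 4.523 ^ 2) * ∫ p, pd (0, 1) w p ^ 2) := by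
        gcongr
    _ = 2.1373 * (∫ p, uyy w p ^ 2)
          + 2.1373 * (5.449 ^ 2 - 4.523 ^ 2) * ∫ p, pd (0, 1) w p ^ 2 := by ring
    _ ≤ (1 + a ^ 4) * (∫ p, uyy w p ^ 2) + 2 * π ^ 2 * ∫ p, pd (0, 1) w p ^ 2 := by
        gcongr ?_ * _ + ?_ * _
        · linarith
        · nlinarith [pi_gt_d4]
    _ ≤ (1 + a ^ 4) * (∫ p, uyy w p ^ 2) + 2 * ∫ p, uxy w p ^ 2 := by
        rw [mul_assoc]
        gcongr

end Slicing

/-- The area-preserving map `(x, y) ↦ (b x, b⁻¹ y)`, which carries the unit square onto `Rect b`. -/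
def squeeze (b : ℝ) (hb : b ≠ 0) : (ℝ × ℝ) ≃L[ℝ] ℝ × ℝ :=
  (ContinuousLinearEquiv.smulLeft (Units.mk0 b hb)).prodCongr
    (ContinuousLinearEquiv.smulLeft (Units.mk0 b hb)⁻¹)

section Squeeze

variable {u : ℝ × ℝ → ℝ} {b : ℝ} (hb : b ≠ 0)

theorem pd_comp_equiv (L : (ℝ × ℝ) ≃L[ℝ] ℝ × ℝ) (u : ℝ × ℝ → ℝ) (w : ℝ × ℝ) :
    pd w (u ∘ L) = pd (L w) u ∘ L := by
  ext p
  simp [pd, L.comp_right_fderiv]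

theorem pd_smul_left (c : ℝ) (w : ℝ × ℝ) (u : ℝ × ℝ → ℝ) : pd (c • w) u = c • pd w u := by
  ext p
  simp [pd]

theorem pd_smul_right (c : ℝ) (w : ℝ × ℝ) (u : ℝ × ℝ → ℝ) : pd w (c • u) = c • pd w u := by
  ext p
  simp [pd, fderiv_const_smul_field]

theorem Adm.comp_equiv {Ω : Set (ℝ × ℝ)} (hu : Adm Ω u) (L : (ℝ × ℝ) ≃L[ℝ] ℝ × ℝ) :
    Adm (L ⁻¹' Ω) (u ∘ L) :=
  ⟨hu.1.comp L.contDiff, hu.2.1.comp_homeomorph L.toHomeomorph,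
    (tsupport_comp_subset_preimage u L.continuous).trans (preimage_mono hu.2.2)⟩

theorem squeeze_apply (p : ℝ × ℝ) : squeeze b hb p = (b * p.1, b⁻¹ * p.2) := rfl

theorem squeeze_preimage_rect (hb₀ : 0 < b) : squeeze b hb₀.ne' ⁻¹' Rect b = Rect 1 := by
  ext p
  simp [Rect, squeeze_apply, hb₀, mul_lt_iff_lt_one_right]

theorem integral_comp_squeeze (φ : ℝ × ℝ → ℝ) : ∫ p, φ (squeeze b hb p) = ∫ p, φ p := by
  have hdet : LinearMap.det ((squeeze b hb : (ℝ × ℝ) →L[ℝ] ℝ × ℝ) : (ℝ × ℝ) →ₗ[ℝ] ℝ × ℝ) = 1 := by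
    change LinearMap.det ((b • (LinearMap.id : ℝ →ₗ[ℝ] ℝ)).prodMap
      (b⁻¹ • (LinearMap.id : ℝ →ₗ[ℝ] ℝ))) = 1
    simp [LinearMap.det_prodMap, hb]
  have hmap := Measure.map_linearMap_addHaar_eq_smul_addHaar (volume : Measure (ℝ × ℝ))
    (hdet.trans_ne one_ne_zero)
  have hmp : MeasurePreserving (squeeze b hb) volume volume :=
    ⟨(squeeze b hb).continuous.measurable,
      hmap.trans (by rw [hdet, inv_one, abs_one, ENNReal.ofReal_one, one_smul])⟩
  exact hmp.integral_comp (squeeze b hb).toHomeomorph.measurableEmbedding φ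

theorem pd_fst_comp_squeeze : pd (1, 0) (u ∘ squeeze b hb) = b • (pd (1, 0) u ∘ squeeze b hb) := by
  have hfst : squeeze b hb (1, 0) = b • ((1, 0) : ℝ × ℝ) := by simp [squeeze_apply]
  rw [pd_comp_equiv, hfst, pd_smul_left]
  rfl

theorem pd_snd_comp_squeeze :
    pd (0, 1) (u ∘ squeeze b hb) = b⁻¹ • (pd (0, 1) u ∘ squeeze b hb) := by
  have hsnd : squeeze b hb (0, 1) = b⁻¹ • ((0, 1) : ℝ × ℝ) := by simp [squeeze_apply]
  rw [pd_comp_equiv, hsnd, pd_smul_left]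
  rfl

theorem integral_uxx_comp_squeeze_sq :
    ∫ p, uxx (u ∘ squeeze b hb) p ^ 2 = b ^ 4 * ∫ p, uxx u p ^ 2 := by
  rw [← integral_const_mul, ← integral_comp_squeeze hb fun p => b ^ 4 * uxx u p ^ 2]
  congr 1 with p
  simp only [uxx, pd_fst_comp_squeeze, pd_smul_right, Pi.smul_apply, Function.comp_apply,
    smul_eq_mul]
  ring

theorem integral_uyy_comp_squeeze_sq :
    ∫ p, uyy (u ∘ squeeze b hb) p ^ 2 = b⁻¹ ^ 4 * ∫ p, uyy u p ^ 2 := by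
  rw [← integral_const_mul, ← integral_comp_squeeze hb fun p => b⁻¹ ^ 4 * uyy u p ^ 2]
  congr 1 with p
  simp only [uyy, pd_snd_comp_squeeze, pd_smul_right, Pi.smul_apply, Function.comp_apply,
    smul_eq_mul]
  ring

theorem integral_uxy_comp_squeeze_sq :
    ∫ p, uxy (u ∘ squeeze b hb) p ^ 2 = ∫ p, uxy u p ^ 2 := by
  rw [← integral_comp_squeeze hb fun p => uxy u p ^ 2]
  congr 1 with p
  simp only [uxy, pd_fst_comp_squeeze, pd_snd_comp_squeeze, pd_smul_right, Pi.smul_apply,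
    Function.comp_apply, smul_eq_mul, mul_inv_cancel_left₀ hb]

end Squeeze

section FirstEigenvalue

variable {a c : ℝ} {u : ℝ × ℝ → ℝ}

theorem Adm.lam1_mul_integral_sq_le (hu : Adm (Rect a) u) :
    lam1 a * ∫ p, u p ^ 2 ≤ ∫ p, lap u p ^ 2 := by
  by_cases hu₀ : u = 0
  · simpa [hu₀] using integral_nonneg fun p => sq_nonneg (lap 0 p)
  rw [← le_div_iff₀ (hu.integral_sq_pos hu₀)]
  refine csInf_le ⟨0, ?_⟩ ⟨u, hu, hu₀, rfl⟩
  rintro _ ⟨v, -, -, rfl⟩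
  exact div_nonneg (integral_nonneg fun _ => sq_nonneg _) (integral_nonneg fun _ => sq_nonneg _)

theorem exists_adm_ne_zero {Ω : Set (ℝ × ℝ)} (hΩ : IsOpen Ω) (hne : Ω.Nonempty) :
    ∃ u, Adm Ω u ∧ u ≠ 0 := by
  obtain ⟨p, hp⟩ := hne
  obtain ⟨u, hsub, hcpt, hsmooth, -, hup⟩ := exists_contDiff_tsupport_subset (n := (⊤ : ℕ∞))
    (hΩ.mem_nhds hp)
  refine ⟨u, ⟨hsmooth, hcpt, hsub⟩, ?_⟩
  rintro rfl
  exact zero_ne_one hup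

theorem le_lam1 (ha : 0 < a) (h : ∀ u, Adm (Rect a) u → c * ∫ p, u p ^ 2 ≤ ∫ p, lap u p ^ 2) :
    c ≤ lam1 a := by
  obtain ⟨u, hu, hu₀⟩ := exists_adm_ne_zero (Ω := Rect a) (isOpen_Ioo.prod isOpen_Ioo)
    ((nonempty_Ioo.2 ha).prod (nonempty_Ioo.2 (one_div_pos.2 ha)))
  refine le_csInf ⟨_, u, hu, hu₀, rfl⟩ ?_
  rintro _ ⟨v, hv, hv₀, rfl⟩
  exact (le_div_iff₀ (hv.integral_sq_pos hv₀)).2 (h v hv)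

theorem lam1_one_add_mul_le_mul_lam1 (ha : 1 ≤ a)
    (hc : ∀ w, Adm (Rect 1) w →
      c * ∫ p, w p ^ 2 ≤ (1 + a ^ 4) * (∫ p, uyy w p ^ 2) + 2 * ∫ p, uxy w p ^ 2) :
    lam1 1 + (a ^ 4 - 1) * c ≤ a ^ 4 * lam1 a := by
  have ha₀ : 0 < a := zero_lt_one.trans_le ha
  rw [← div_le_iff₀' (by positivity)]
  refine le_lam1 ha₀ fun u hu => ?_
  rw [div_mul_eq_mul_div, div_le_iff₀' (by positivity)]
  set w := u ∘ squeeze a ha₀.ne'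
  have hw : Adm (Rect 1) w := by
    simpa only [squeeze_preimage_rect ha₀] using hu.comp_equiv (squeeze a ha₀.ne')
  have hsq : ∫ p, w p ^ 2 = ∫ p, u p ^ 2 := integral_comp_squeeze ha₀.ne' fun p => u p ^ 2
  have hlap : a ^ 4 * ∫ p, lap u p ^ 2 = (∫ p, lap w p ^ 2)
      + (a ^ 4 - 1) * ((1 + a ^ 4) * (∫ p, uyy w p ^ 2) + 2 * ∫ p, uxy w p ^ 2) := by
    rw [hu.integral_lap_sq, hw.integral_lap_sq, integral_uxx_comp_squeeze_sq,
      integral_uyy_comp_squeeze_sq, integral_uxy_comp_squeeze_sq]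
    field_simp
    ring
  rw [hlap, ← hsq, add_mul, mul_assoc]
  gcongr
  · exact hw.lam1_mul_integral_sq_le
  · exact sub_nonneg.2 (one_le_pow₀ ha)
  · exact hc w hw

end FirstEigenvalue

/-- The tensor product `f ⊗ g`, for trial functions in separated variables. -/
def tensor (f g : ℝ → ℝ) (p : ℝ × ℝ) : ℝ := f p.1 * g p.2

section Tensor

variable {f g : ℝ → ℝ} {a : ℝ}

theorem integral_tensor_sq (f g : ℝ → ℝ) :
    ∫ p, tensor f g p ^ 2 = (∫ x, f x ^ 2) * ∫ y, g y ^ 2 := by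
  simp only [tensor, mul_pow]
  exact integral_prod_mul (fun x => f x ^ 2) fun y => g y ^ 2

theorem differentiable_tensor (hf : Differentiable ℝ f) (hg : Differentiable ℝ g) :
    Differentiable ℝ (tensor f g) :=
  (hf.comp differentiable_fst).mul (hg.comp differentiable_snd)

theorem pd_fst_tensor (hf : Differentiable ℝ f) (hg : Differentiable ℝ g) :
    pd (1, 0) (tensor f g) = tensor (deriv f) g := by
  ext ⟨x, y⟩
  rw [← congrFun (deriv_fst_slice (differentiable_tensor hf hg) y) x]
  exact deriv_mul_const (hf x) (g y)

theorem pd_snd_tensor (hf : Differentiable ℝ f) (hg : Differentiable ℝ g) :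
    pd (0, 1) (tensor f g) = tensor f (deriv g) := by
  ext ⟨x, y⟩
  rw [← congrFun (deriv_snd_slice (differentiable_tensor hf hg) x) y]
  exact deriv_const_mul (f x) (hg y)

theorem tsupport_tensor_subset : tsupport (tensor f g) ⊆ tsupport f ×ˢ tsupport g :=
  closure_minimal
    (fun _ hp => ⟨subset_tsupport f (left_ne_zero_of_mul hp),
      subset_tsupport g (right_ne_zero_of_mul hp)⟩)
    ((isClosed_tsupport f).prod (isClosed_tsupport g))

theorem adm_tensor (hf : ContDiff ℝ (⊤ : ℕ∞) f) (hg : ContDiff ℝ (⊤ : ℕ∞) g)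
    (hfa : tsupport f ⊆ Ioo 0 a) (hga : tsupport g ⊆ Ioo 0 (1 / a)) :
    Adm (Rect a) (tensor f g) := by
  have hsub : tsupport (tensor f g) ⊆ Rect a :=
    tsupport_tensor_subset.trans (prod_mono hfa hga)
  exact ⟨(hf.comp contDiff_fst).mul (hg.comp contDiff_snd),
    (isCompact_Icc.prod isCompact_Icc).of_isClosed_subset (isClosed_tsupport _)
      (hsub.trans (prod_mono Ioo_subset_Icc_self Ioo_subset_Icc_self)), hsub⟩

theorem lam1_mul_le_of_tensor (hf : ContDiff ℝ (⊤ : ℕ∞) f) (hg : ContDiff ℝ (⊤ : ℕ∞) g)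
    (hfa : tsupport f ⊆ Ioo 0 a) (hga : tsupport g ⊆ Ioo 0 (1 / a)) :
    lam1 a * ((∫ x, f x ^ 2) * ∫ y, g y ^ 2) ≤
      (∫ x, deriv (deriv f) x ^ 2) * (∫ y, g y ^ 2)
        + (∫ x, f x ^ 2) * (∫ y, deriv (deriv g) y ^ 2)
        + 2 * ((∫ x, deriv f x ^ 2) * ∫ y, deriv g y ^ 2) := by
  have hf₁ : Differentiable ℝ f := hf.differentiable (by simp)
  have hg₁ : Differentiable ℝ g := hg.differentiable (by simp)
  have hf₂ : Differentiable ℝ (deriv f) := (hf.deriv' (n := (⊤ : ℕ∞))).differentiable (by simp)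
  have hg₂ : Differentiable ℝ (deriv g) := (hg.deriv' (n := (⊤ : ℕ∞))).differentiable (by simp)
  have hadm := adm_tensor hf hg hfa hga
  have hle := hadm.lam1_mul_integral_sq_le
  rwa [hadm.integral_lap_sq, uxx, uyy, uxy, pd_fst_tensor hf₁ hg₁, pd_snd_tensor hf₁ hg₁,
    pd_fst_tensor hf₂ hg₁, pd_snd_tensor hf₁ hg₂, pd_snd_tensor hf₂ hg₁, integral_tensor_sq,
    integral_tensor_sq, integral_tensor_sq, integral_tensor_sq] at hle

end Tensor

section Approximation

variable {f : ℝ → ℝ} {a b M : ℝ}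

theorem abs_le_mul_of_abs_deriv_le (hf : Differentiable ℝ f) (hfab : tsupport f ⊆ Ioo a b)
    (hM : ∀ x, |deriv f x| ≤ M) (hab : a ≤ b) (x : ℝ) : |f x| ≤ M * (b - a) := by
  have hM₀ : 0 ≤ M := (abs_nonneg _).trans (hM 0)
  have hf₀ : ∀ x ∉ Ioo a b, f x = 0 := fun x hx =>
    image_eq_zero_of_notMem_tsupport fun h => hx (hfab h)
  by_cases hx : x ∈ Ioo a b
  · calc |f x| = ‖f x - f a‖ := by rw [hf₀ a left_notMem_Ioo, sub_zero, norm_eq_abs]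
      _ ≤ M * ‖x - a‖ := convex_univ.norm_image_sub_le_of_norm_deriv_le (fun y _ => hf y)
          (fun y _ => hM y) (mem_univ a) (mem_univ x)
      _ ≤ M * (b - a) := by
          rw [norm_of_nonneg (sub_nonneg.2 hx.1.le)]
          gcongr
          exact hx.2.le
  · rw [hf₀ x hx, abs_zero]
    exact mul_nonneg hM₀ (sub_nonneg.2 hab)

theorem tendsto_integral_sq_of_eventually_eq {ι : Type*} {l : Filter ι} [l.IsCountablyGenerated]
    {A : ι → ℝ → ℝ} {A₀ : ℝ → ℝ} (hab : a ≤ b) (hA : ∀ᶠ i in l, Continuous (A i))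
    (hAab : ∀ᶠ i in l, tsupport (A i) ⊆ Ioo a b) (hAM : ∀ᶠ i in l, ∀ x, |A i x| ≤ M)
    (hA₀ : ∀ x ∈ Ioo a b, ∀ᶠ i in l, A i x = A₀ x) :
    Tendsto (fun i => ∫ x, A i x ^ 2) l (𝓝 (∫ x in a..b, A₀ x ^ 2)) := by
  rw [intervalIntegral.integral_of_le hab, integral_Ioc_eq_integral_Ioo,
    ← integral_indicator measurableSet_Ioo]
  refine tendsto_integral_filter_of_dominated_convergence ((Ioo a b).indicator fun _ => M ^ 2)
    (hA.mono fun i hi => (hi.pow 2).aestronglyMeasurable) ?_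
    ((integrable_indicator_iff measurableSet_Ioo).2 (by simp)) (.of_forall fun x => ?_)
  · filter_upwards [hAab, hAM] with i hiab hiM
    refine .of_forall fun x => ?_
    by_cases hx : x ∈ Ioo a b
    · rw [indicator_of_mem hx, norm_pow]
      exact pow_le_pow_left₀ (norm_nonneg _) (hiM x) 2
    · rw [indicator_of_notMem hx, image_eq_zero_of_notMem_tsupport fun h => hx (hiab h)]
      simp
  · refine tendsto_const_nhds.congr' ?_
    by_cases hx : x ∈ Ioo a b
    · filter_upwards [hA₀ x hx] with i hi
      rw [indicator_of_mem hx, hi]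
    · filter_upwards [hAab] with i hi
      rw [indicator_of_notMem hx, image_eq_zero_of_notMem_tsupport fun h => hx (hi h)]
      simp

end Approximation

/-- A smooth function that vanishes for `r ≤ 1` and agrees with `r²` for `2 ≤ r`. -/
def cutSq (r : ℝ) : ℝ := r ^ 2 * smoothTransition (r - 1)

/-- The clamped profile `x² (1 - x)²`, a degree-four approximation of the first vibration mode of
the clamped beam. -/
def quartic (x : ℝ) : ℝ := (x * (1 - x)) ^ 2

/-- Smooth approximation of `quartic` with support inside `(0, 1)`, for large `c`. Cutting off as a
function of `x (1 - x)` keeps the second derivatives bounded uniformly in `c`. -/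
def cutQuartic (c x : ℝ) : ℝ := cutSq (c * (x * (1 - x))) / c ^ 2

section CutSq

variable {r : ℝ}

theorem contDiff_cutSq {n : ℕ∞} : ContDiff ℝ n cutSq :=
  (contDiff_id.pow 2).mul (smoothTransition.contDiff.comp (contDiff_id.sub contDiff_const))

theorem cutSq_of_le_one (hr : r ≤ 1) : cutSq r = 0 := by
  rw [cutSq, smoothTransition.zero_of_nonpos (sub_nonpos.2 hr), mul_zero]

theorem cutSq_of_two_le (hr : 2 ≤ r) : cutSq r = r ^ 2 := by
  rw [cutSq, smoothTransition.one_of_one_le (by linarith), mul_one]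

theorem cutSq_eventuallyEq_zero (hr : r < 1) : cutSq =ᶠ[𝓝 r] fun _ => 0 :=
  (eventually_lt_nhds hr).mono fun _ hs => cutSq_of_le_one hs.le

theorem cutSq_eventuallyEq_sq (hr : 2 < r) : cutSq =ᶠ[𝓝 r] fun s => s ^ 2 :=
  (eventually_gt_nhds hr).mono fun _ hs => cutSq_of_two_le hs.le

theorem differentiable_deriv_cutSq : Differentiable ℝ (deriv cutSq) :=
  ((contDiff_cutSq (n := 2)).deriv' (n := 1)).differentiable one_ne_zero

theorem exists_abs_deriv_deriv_cutSq_le : ∃ C, ∀ r, |deriv (deriv cutSq) r| ≤ C := by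
  obtain ⟨C, hC⟩ := isCompact_Icc.exists_bound_of_continuousOn (s := Icc (1 : ℝ) 2)
    ((contDiff_cutSq (n := 2)).deriv' (n := 1)).continuous_deriv_one.continuousOn
  refine ⟨max C 2, fun r => ?_⟩
  rcases lt_or_ge r 1 with hr₁ | hr₁
  · simp [(cutSq_eventuallyEq_zero hr₁).deriv.deriv_eq]
  rcases lt_or_ge 2 r with hr₂ | hr₂
  · have hderiv : deriv (fun s : ℝ => s ^ 2) = fun s => 2 * s := by
      ext s
      simp
    simp [(cutSq_eventuallyEq_sq hr₂).deriv.deriv_eq, hderiv]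
  · exact (hC r ⟨hr₁, hr₂⟩).trans (le_max_left C 2)

theorem abs_deriv_cutSq_le {C : ℝ} (hC : ∀ r, |deriv (deriv cutSq) r| ≤ C) (r : ℝ) :
    |deriv cutSq r| ≤ C * |r| := by
  have hmvt := convex_univ.norm_image_sub_le_of_norm_deriv_le
    (fun s _ => differentiable_deriv_cutSq s) (fun s _ => hC s) (mem_univ 0) (mem_univ r)
  simpa [(cutSq_eventuallyEq_zero zero_lt_one).deriv_eq] using hmvt

end CutSq

section CutQuartic

variable {c x : ℝ}

theorem contDiff_cutQuartic (c : ℝ) : ContDiff ℝ (⊤ : ℕ∞) (cutQuartic c) :=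
  (contDiff_cutSq.comp (by fun_prop : ContDiff ℝ _ fun x => c * (x * (1 - x)))).div_const _

theorem contDiff_deriv_cutQuartic (c : ℝ) : ContDiff ℝ (⊤ : ℕ∞) (deriv (cutQuartic c)) :=
  (contDiff_cutQuartic c).deriv'

theorem tsupport_cutQuartic_subset (hc : 0 < c) : tsupport (cutQuartic c) ⊆ Ioo 0 1 := by
  have hsub : tsupport (cutQuartic c) ⊆ {x | 1 ≤ c * (x * (1 - x))} := by
    refine closure_minimal (fun x hx => ?_) (isClosed_le continuous_const (by fun_prop))
    by_contra! hx₁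
    exact hx (by rw [cutQuartic, cutSq_of_le_one (not_le.1 hx₁).le, zero_div])
  intro x hx
  have hpos : 0 < x * (1 - x) := pos_of_mul_pos_right (zero_lt_one.trans_le (hsub hx)) hc.le
  constructor <;> nlinarith

theorem hasDerivAt_mul_quadratic (c x : ℝ) :
    HasDerivAt (fun x : ℝ => c * (x * (1 - x))) (c * (1 - 2 * x)) x := by
  refine (((hasDerivAt_id x).mul ((hasDerivAt_id x).const_sub 1)).const_mul c).congr_deriv ?_
  simp only [id]
  ring

theorem deriv_cutQuartic (hc : c ≠ 0) :
    deriv (cutQuartic c) = fun x => deriv cutSq (c * (x * (1 - x))) * (1 - 2 * x) / c := by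
  ext x
  have hd : HasDerivAt cutSq _ (c * (x * (1 - x))) :=
    ((contDiff_cutSq (n := 1)).differentiable one_ne_zero _).hasDerivAt
  refine ((hd.comp x (hasDerivAt_mul_quadratic c x)).div_const (c ^ 2)).deriv.trans ?_
  field_simp

theorem deriv_deriv_cutQuartic (hc : c ≠ 0) (x : ℝ) : deriv (deriv (cutQuartic c)) x =
    deriv (deriv cutSq) (c * (x * (1 - x))) * (1 - 2 * x) ^ 2
      - 2 * (deriv cutSq (c * (x * (1 - x))) / c) := by
  have hd := (differentiable_deriv_cutSq (c * (x * (1 - x)))).hasDerivAt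
  have hlin := ((hasDerivAt_id x).const_mul 2).const_sub 1
  rw [deriv_cutQuartic hc]
  refine (((hd.comp x (hasDerivAt_mul_quadratic c x)).mul hlin).div_const c).deriv.trans ?_
  simp only [Function.comp_apply, id]
  field_simp
  ring

theorem abs_deriv_deriv_cutQuartic_le {C : ℝ} (hC : ∀ r, |deriv (deriv cutSq) r| ≤ C)
    (hc : 0 < c) (x : ℝ) : |deriv (deriv (cutQuartic c)) x| ≤ 3 * C := by
  have hC₀ : 0 ≤ C := (abs_nonneg _).trans (hC 0)
  by_cases hx : x ∈ Ioo 0 1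
  · have hquad : |x * (1 - x)| ≤ 1 := by
      rw [abs_le]
      constructor <;> nlinarith [hx.1, hx.2]
    have hsecond : |deriv (deriv cutSq) (c * (x * (1 - x))) * (1 - 2 * x) ^ 2| ≤ C * 1 := by
      rw [abs_mul, abs_of_nonneg (sq_nonneg (1 - 2 * x))]
      exact mul_le_mul (hC _) (by nlinarith [hx.1, hx.2]) (sq_nonneg _) hC₀
    have hfirst : |deriv cutSq (c * (x * (1 - x))) / c| ≤ C := by
      rw [abs_div, abs_of_pos hc, div_le_iff₀ hc]
      refine (abs_deriv_cutSq_le hC _).trans ?_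
      rw [abs_mul, abs_of_pos hc]
      exact mul_le_mul_of_nonneg_left (mul_le_of_le_one_right hc.le hquad) hC₀
    rw [deriv_deriv_cutQuartic hc.ne']
    rw [abs_le] at hsecond hfirst ⊢
    constructor <;> linarith
  · have hx' : x ∉ tsupport (cutQuartic c) := fun h => hx (tsupport_cutQuartic_subset hc h)
    rw [image_eq_zero_of_notMem_tsupport fun h =>
      hx' (tsupport_deriv_subset (tsupport_deriv_subset h)), abs_zero]
    positivity

theorem eventually_cutQuartic_eventuallyEq (hx : x ∈ Ioo 0 1) :
    ∀ᶠ c in atTop, cutQuartic c =ᶠ[𝓝 x] quartic := by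
  have hpos : 0 < x * (1 - x) := mul_pos hx.1 (sub_pos.2 hx.2)
  filter_upwards [eventually_gt_atTop 0, eventually_gt_atTop (2 / (x * (1 - x)))] with c hc hcx
  have hnhds : ∀ᶠ y in 𝓝 x, 2 < c * (y * (1 - y)) :=
    (isOpen_lt continuous_const (by fun_prop)).mem_nhds ((div_lt_iff₀ hpos).1 hcx)
  filter_upwards [hnhds] with y hy
  rw [cutQuartic, cutSq_of_two_le hy.le, quartic]
  field_simp

theorem deriv_quartic : deriv quartic = fun x => 2 * x - 6 * x ^ 2 + 4 * x ^ 3 := by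
  ext x
  have hd := (hasDerivAt_mul_quadratic 1 x).pow 2
  simp only [one_mul] at hd
  refine hd.deriv.trans ?_
  simp only [Nat.cast_ofNat, Nat.add_one_sub_one, pow_one]
  ring

theorem deriv_deriv_quartic (x : ℝ) : deriv (deriv quartic) x = 2 - 12 * x + 12 * x ^ 2 := by
  rw [deriv_quartic]
  refine (((((hasDerivAt_id x).const_mul 2).sub (((hasDerivAt_id x).pow 2).const_mul 6)).add
    (((hasDerivAt_id x).pow 3).const_mul 4)).deriv).trans ?_
  simp only [mul_one, Nat.cast_ofNat, id_eq, Nat.add_one_sub_one, pow_one]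
  ring

theorem integral_quartic_sq : ∫ x in (0 : ℝ)..1, quartic x ^ 2 = 1 / 630 := by
  have hexpand (x : ℝ) : quartic x ^ 2 = x ^ 4 - 4 * x ^ 5 + 6 * x ^ 6 - 4 * x ^ 7 + x ^ 8 := by
    rw [quartic]
    ring
  simp (disch := exact Continuous.intervalIntegrable (by fun_prop) _ _) only [hexpand,
    intervalIntegral.integral_add, intervalIntegral.integral_sub,
    intervalIntegral.integral_const_mul, integral_pow]
  norm_num

theorem integral_deriv_quartic_sq : ∫ x in (0 : ℝ)..1, deriv quartic x ^ 2 = 2 / 105 := by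
  have hexpand (x : ℝ) : deriv quartic x ^ 2 =
      4 * x ^ 2 - 24 * x ^ 3 + 52 * x ^ 4 - 48 * x ^ 5 + 16 * x ^ 6 := by
    rw [deriv_quartic]
    ring
  simp (disch := exact Continuous.intervalIntegrable (by fun_prop) _ _) only [hexpand,
    intervalIntegral.integral_add, intervalIntegral.integral_sub,
    intervalIntegral.integral_const_mul, integral_pow]
  norm_num

theorem integral_deriv_deriv_quartic_sq :
    ∫ x in (0 : ℝ)..1, deriv (deriv quartic) x ^ 2 = 4 / 5 := by
  have hexpand (x : ℝ) : deriv (deriv quartic) x ^ 2 =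
      4 * x ^ 0 - 48 * x ^ 1 + 192 * x ^ 2 - 288 * x ^ 3 + 144 * x ^ 4 := by
    rw [deriv_deriv_quartic]
    ring
  simp (disch := exact Continuous.intervalIntegrable (by fun_prop) _ _) only [hexpand,
    intervalIntegral.integral_add, intervalIntegral.integral_sub,
    intervalIntegral.integral_const_mul, integral_pow]
  norm_num

theorem exists_abs_cutQuartic_le : ∃ M, ∀ c > 0, ∀ x, |cutQuartic c x| ≤ M ∧
    |deriv (cutQuartic c) x| ≤ M ∧ |deriv (deriv (cutQuartic c)) x| ≤ M := by
  obtain ⟨C, hC⟩ := exists_abs_deriv_deriv_cutSq_le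
  refine ⟨3 * C * (1 - 0), fun c hc => ?_⟩
  have hsupp := tsupport_cutQuartic_subset hc
  have hM₂ := abs_deriv_deriv_cutQuartic_le hC hc
  have hM₁ := abs_le_mul_of_abs_deriv_le ((contDiff_deriv_cutQuartic c).differentiable (by simp))
    (tsupport_deriv_subset.trans hsupp) hM₂ zero_le_one
  have hM₀ := abs_le_mul_of_abs_deriv_le ((contDiff_cutQuartic c).differentiable (by simp)) hsupp
    (fun x => by simpa using hM₁ x) zero_le_one
  exact fun x => ⟨hM₀ x, hM₁ x, by simpa using hM₂ x⟩

theorem tendsto_integral_cutQuartic_sq :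
    Tendsto (fun c => ∫ x, cutQuartic c x ^ 2) atTop (𝓝 (1 / 630)) := by
  obtain ⟨M, hM⟩ := exists_abs_cutQuartic_le
  have hc := eventually_gt_atTop (0 : ℝ)
  rw [← integral_quartic_sq]
  exact tendsto_integral_sq_of_eventually_eq zero_le_one
    (.of_forall fun c => (contDiff_cutQuartic c).continuous)
    (hc.mono fun c hc => tsupport_cutQuartic_subset hc)
    (hc.mono fun c hc x => (hM c hc x).1)
    fun x hx => (eventually_cutQuartic_eventuallyEq hx).mono fun c hx => hx.eq_of_nhds

theorem tendsto_integral_deriv_cutQuartic_sq :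
    Tendsto (fun c => ∫ x, deriv (cutQuartic c) x ^ 2) atTop (𝓝 (2 / 105)) := by
  obtain ⟨M, hM⟩ := exists_abs_cutQuartic_le
  have hc := eventually_gt_atTop (0 : ℝ)
  rw [← integral_deriv_quartic_sq]
  exact tendsto_integral_sq_of_eventually_eq zero_le_one
    (.of_forall fun c => (contDiff_deriv_cutQuartic c).continuous)
    (hc.mono fun c hc => tsupport_deriv_subset.trans (tsupport_cutQuartic_subset hc))
    (hc.mono fun c hc x => (hM c hc x).2.1)
    fun x hx => (eventually_cutQuartic_eventuallyEq hx).mono fun c hx => hx.deriv_eq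

theorem tendsto_integral_deriv_deriv_cutQuartic_sq :
    Tendsto (fun c => ∫ x, deriv (deriv (cutQuartic c)) x ^ 2) atTop (𝓝 (4 / 5)) := by
  obtain ⟨M, hM⟩ := exists_abs_cutQuartic_le
  have hc := eventually_gt_atTop (0 : ℝ)
  rw [← integral_deriv_deriv_quartic_sq]
  exact tendsto_integral_sq_of_eventually_eq zero_le_one
    (.of_forall fun c => (contDiff_deriv_cutQuartic c).continuous_deriv (by simp))
    (hc.mono fun c hc => tsupport_deriv_subset.trans
      (tsupport_deriv_subset.trans (tsupport_cutQuartic_subset hc)))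
    (hc.mono fun c hc x => (hM c hc x).2.2)
    fun x hx => (eventually_cutQuartic_eventuallyEq hx).mono fun c hx => hx.deriv.deriv_eq

end CutQuartic

theorem lam1_one_le : lam1 1 ≤ 1296 := by
  have hf := tendsto_integral_cutQuartic_sq
  have hf₁ := tendsto_integral_deriv_cutQuartic_sq
  have hf₂ := tendsto_integral_deriv_deriv_cutQuartic_sq
  have hle := le_of_tendsto_of_tendsto ((hf.mul hf).const_mul (lam1 1))
    (((hf₂.mul hf).add (hf.mul hf₂)).add ((hf₁.mul hf₁).const_mul 2))
    ((eventually_gt_atTop 0).mono fun c hc =>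
      lam1_mul_le_of_tensor (contDiff_cutQuartic c) (contDiff_cutQuartic c)
        (tsupport_cutQuartic_subset hc) (by simpa using tsupport_cutQuartic_subset hc))
  norm_num at hle
  linarith

theorem lam1_one_lt_lam1 {a : ℝ} (ha : 1.032695 ≤ a) : lam1 1 < lam1 a := by
  have ha₁ : 1 < a := lt_of_lt_of_le (by norm_num) ha
  have ha₄ : 1 < a ^ 4 := one_lt_pow₀ ha₁ four_ne_zero
  have hscale := lam1_one_add_mul_le_mul_lam1 ha₁.le fun w hw =>
    hw.mul_integral_sq_le_uyy_add_uxy ha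
  refine lt_of_mul_lt_mul_left ?_ (zero_lt_one.trans ha₄).le
  calc a ^ 4 * lam1 1 = lam1 1 + (a ^ 4 - 1) * lam1 1 := by ring
    _ < lam1 1 + (a ^ 4 - 1) * 1298 := by
        gcongr
        exact lam1_one_le.trans_lt (by norm_num)
    _ ≤ a ^ 4 * lam1 a := hscale

/-- For every `a ≥ 1.032695`, `λ₁(a) > λ₁(1)`; consequently any minimiser of
`λ₁` among rectangles of unit area lies in `[1, 1.032695)`. -/
theorem first_eigenvalue_large_far_from_square :
    (∀ a : ℝ, 1.032695 ≤ a → lam1 1 < lam1 a) ∧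
    (∀ astar : ℝ, 1 ≤ astar → (∀ a : ℝ, 1 ≤ a → lam1 astar ≤ lam1 a) →
      astar < 1.032695) := by
  refine ⟨fun a => lam1_one_lt_lam1, fun astar _ hmin => ?_⟩
  by_contra! hfar
  exact (lam1_one_lt_lam1 hfar).not_ge (hmin 1 le_rfl)
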